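/- arXiv:2203.14521 — 2 statements merged into one kernel-verified Lean document; each statement's English description precedes it below -/
import Mathlib

section
/- Let G be a finite simple graph with vertex set G_0 and let R be a lluf subquiver of the double D(G) with dim DE(R) = dim SE(G) − 1. Then DE(R) is a facet of SE(G) if and only if |π_0(R)| = |π_0(D(G))| and there exists a function ρ ∈ ℝ^{G_0} such that for every (v,w) ∈ D(G)_1: ρ(v)−ρ(w) = 1 if (v,w)∈R_1, ρ(v)−ρ(w) = −1 if (w,v)∈R_1, and ρ(v)−ρ(w) = 0 otherwise. -/
open scoped BigOperators

/-- The vector `ε_(v,w) = e_v - e_w` in `ℝ^V`. -/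
def epsVec {V : Type*} [DecidableEq V] (e : V × V) : V → ℝ :=
  fun u => (if u = e.1 then (1 : ℝ) else 0) - (if u = e.2 then (1 : ℝ) else 0)

/-- The directed edge polytope of the quiver with edge set `E`. -/
def DE {V : Type*} [DecidableEq V] (E : Set (V × V)) : Set (V → ℝ) :=
  convexHull ℝ (epsVec '' E)

/-- The edge relation of a quiver. -/
def edgeRel {V : Type*} (E : Set (V × V)) : V → V → Prop := fun a b => (a, b) ∈ E

/-- Number of connected components (with respect to undirected walks). -/
noncomputable def numComponents {V : Type*} (E : Set (V × V)) : ℕ :=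
  Nat.card (Quot (Relation.EqvGen (edgeRel E)))

/-- `E` admits a rank function. -/
def HasRankFn {V : Type*} (E : Set (V × V)) : Prop :=
  ∃ ρ : V → ℝ, ∀ e ∈ E, ρ e.1 + 1 = ρ e.2

open Classical in
/-- Dimension of a polytope: dimension of its affine hull, `-1` for the empty set. -/
noncomputable def polyDim {V : Type*} (s : Set (V → ℝ)) : ℤ :=
  if s = ∅ then -1 else (Module.finrank ℝ (affineSpan ℝ s).direction : ℤ)

/-- `F` is a face of `P`: `F = P` or `F` is the intersection of `P`
with a supporting hyperplane. -/
def IsFaceOf {V : Type*} (F P : Set (V → ℝ)) : Prop :=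
  F = P ∨ ∃ (l : (V → ℝ) →ₗ[ℝ] ℝ) (c : ℝ), (∀ x ∈ P, l x ≤ c) ∧ F = {x ∈ P | l x = c}

/-- `F` is a facet of `P`: a face of dimension `dim P - 1`. -/
def IsFacetOf {V : Type*} (F P : Set (V → ℝ)) : Prop :=
  IsFaceOf F P ∧ polyDim F = polyDim P - 1

/-- Each connected component of the subquiver `R1` is a full subquiver of `Q1`. -/
def ComponentsFull {V : Type*} (Q1 R1 : Set (V × V)) : Prop :=
  ∀ v w : V, Relation.EqvGen (edgeRel R1) v w → (v, w) ∈ Q1 → (v, w) ∈ R1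

/-- Edge set of the contraction `Q/R`. -/
def contraction {V : Type*} (Q1 R1 : Set (V × V)) :
    Set (Quot (Relation.EqvGen (edgeRel R1)) × Quot (Relation.EqvGen (edgeRel R1))) :=
  {p | ∃ e ∈ Q1 \ R1, p = (Quot.mk _ e.1, Quot.mk _ e.2)}

/-- A quiver is acyclic if it has no closed directed walk of length `> 1`. -/
def IsAcyclicQ {α : Type*} (E : Set (α × α)) : Prop :=
  ¬ ∃ (n : ℕ) (v : Fin (n + 1) → α), 1 < n ∧ v 0 = v (Fin.last n) ∧
      ∀ i : Fin n, (v i.castSucc, v i.succ) ∈ E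

/-- The edge set of the double `D(G)` of a simple graph `G`. -/
def doubleEdges {V : Type*} (G : SimpleGraph V) : Set (V × V) :=
  {p : V × V | G.Adj p.1 p.2}

theorem epsVec_eq_single {V : Type*} [DecidableEq V] (e : V × V) :
    epsVec e = Pi.single e.1 (1 : ℝ) - Pi.single e.2 (1 : ℝ) := by
  funext u
  simp [epsVec, Pi.single_apply]

/-- Points of a convex hull on a supporting hyperplane. -/
theorem mem_hull_face {V : Type*} (S : Set (V → ℝ)) (l : (V → ℝ) →ₗ[ℝ] ℝ) (c : ℝ)
    (h : ∀ x ∈ S, l x ≤ c) (x : V → ℝ) (hx : x ∈ convexHull ℝ S) :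
    l x ≤ c ∧ (l x = c → x ∈ convexHull ℝ {s ∈ S | l s = c}) := by
  have : convexHull ℝ S ⊆ {x | l x ≤ c ∧ (l x = c → x ∈ convexHull ℝ {s ∈ S | l s = c})} := by
    apply convexHull_min
    · intro s hs
      exact ⟨h s hs, fun he => subset_convexHull ℝ _ ⟨hs, he⟩⟩
    · rintro x ⟨hx1, hx2⟩ y ⟨hy1, hy2⟩ a b ha hb hab
      have hl : l (a • x + b • y) = a * l x + b * l y := by simp
      have h1 : a * l x ≤ a * c := mul_le_mul_of_nonneg_left hx1 ha
      have h2 : b * l y ≤ b * c := mul_le_mul_of_nonneg_left hy1 hb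
      have h3 : a * c + b * c = c := by rw [← add_mul, hab, one_mul]
      refine ⟨by rw [hl]; linarith, fun he => ?_⟩
      rw [hl] at he
      rcases ha.eq_or_lt with ha0 | ha0
      · have hb1 : b = 1 := by linarith
        subst hb1
        rw [← ha0] at he ⊢
        simpa using hy2 (by linarith)
      rcases hb.eq_or_lt with hb0 | hb0
      · have ha1 : a = 1 := by linarith
        subst ha1
        rw [← hb0] at he ⊢
        simpa using hx2 (by linarith)
      have hx3 : l x = c := mul_left_cancel₀ ha0.ne' (by linarith)
      have hy3 : l y = c := mul_left_cancel₀ hb0.ne' (by linarith)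
      exact convex_convexHull ℝ _ (hx2 hx3) (hy2 hy3) ha hb hab
  exact this hx

theorem mem_of_epsVec_mem_DE {V : Type*} [DecidableEq V] (E : Set (V × V)) (v w : V) (hvw : v ≠ w)
    (h : epsVec (v, w) ∈ DE E) : (v, w) ∈ E := by
  by_contra hn
  let l : (V → ℝ) →ₗ[ℝ] ℝ := LinearMap.proj (R := ℝ) (φ := fun _ : V => ℝ) v - LinearMap.proj (R := ℝ) (φ := fun _ : V => ℝ) w
  have hsub : DE E ⊆ {x | l x < 2} := by
    apply convexHull_min
    · rintro _ ⟨⟨a, b⟩, hab, rfl⟩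
      have hne : ¬ (v = a ∧ w = b) := by
        rintro ⟨rfl, rfl⟩
        exact hn hab
      simp only [l, Set.mem_setOf_eq, LinearMap.sub_apply, LinearMap.proj_apply, epsVec]
      split_ifs <;> norm_num <;> simp_all
    · exact convex_halfSpace_lt (LinearMap.isLinear _) 2
  have := hsub h
  simp [l, epsVec, hvw, hvw.symm] at this
  norm_num at this

theorem polyDim_DE {V : Type*} [DecidableEq V] (E : Set (V × V)) (h : E.Nonempty) :
    polyDim (DE E) = (Module.finrank ℝ (vectorSpan ℝ (epsVec '' E)) : ℤ) := by
  have : DE E ≠ ∅ := by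
    have : (DE E).Nonempty := (h.image epsVec).mono (subset_convexHull ℝ _)
    exact this.ne_empty
  rw [polyDim, if_neg this, DE, affineSpan_convexHull, direction_affineSpan]

theorem polyDim_DE_empty {V : Type*} [DecidableEq V] :
    polyDim (DE (∅ : Set (V × V))) = -1 := by
  simp [polyDim, DE]

theorem epsVec_swap {V : Type*} [DecidableEq V] (v w : V) : epsVec (w, v) = - epsVec (v, w) := by
  simp [epsVec_eq_single]

theorem vectorSpan_double {V : Type*} [DecidableEq V] (G : SimpleGraph V) :
    vectorSpan ℝ (epsVec '' doubleEdges G) = Submodule.span ℝ (epsVec '' doubleEdges G) := by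
  apply le_antisymm
  · rw [vectorSpan_def, Submodule.span_le]
    rintro _ ⟨x, hx, y, hy, rfl⟩
    exact Submodule.sub_mem _ (Submodule.subset_span hx) (Submodule.subset_span hy)
  · rw [Submodule.span_le]
    rintro _ ⟨⟨v, w⟩, hx, rfl⟩
    have h1 : epsVec (v, w) ∈ epsVec '' doubleEdges G := ⟨_, hx, rfl⟩
    have h2 : epsVec (w, v) ∈ epsVec '' doubleEdges G := ⟨(w, v), SimpleGraph.Adj.symm (G := G) (u := v) (v := w) hx, rfl⟩
    have h3 := vsub_mem_vectorSpan ℝ h1 h2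
    rw [epsVec_swap v w] at h3
    have h4 := Submodule.smul_mem _ (1/2 : ℝ) h3
    have h5 : (1/2 : ℝ) • (epsVec (v, w) -ᵥ -epsVec (v, w)) = epsVec (v, w) := by
      funext u
      simp
      ring
    rwa [h5] at h4

theorem eqvGen_of_mem_span {V : Type*} [Fintype V] [DecidableEq V] (R : Set (V × V)) (v w : V)
    (h : epsVec (v, w) ∈ Submodule.span ℝ (epsVec '' R)) :
    Relation.EqvGen (edgeRel R) v w := by
  classical
  by_contra hn
  let f : V → ℝ := fun u => if Relation.EqvGen (edgeRel R) v u then 1 else 0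
  let l : (V → ℝ) →ₗ[ℝ] ℝ := Fintype.linearCombination ℝ f
  have hl : ∀ a b, l (epsVec (a, b)) = f a - f b := by
    intro a b
    simp [l, epsVec_eq_single, Fintype.linearCombination_apply_single]
  have hle : Submodule.span ℝ (epsVec '' R) ≤ LinearMap.ker l := by
    rw [Submodule.span_le]
    rintro _ ⟨⟨a, b⟩, hab, rfl⟩
    have hr : Relation.EqvGen (edgeRel R) a b := Relation.EqvGen.rel _ _ hab
    have hiff : Relation.EqvGen (edgeRel R) v a ↔ Relation.EqvGen (edgeRel R) v b :=
      ⟨fun h => h.trans _ _ _ hr, fun h => h.trans _ _ _ (hr.symm _ _)⟩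
    simp [hl, f, hiff]
  have h0 := hle h
  rw [LinearMap.mem_ker, hl] at h0
  simp [f, hn, Relation.EqvGen.refl] at h0

/-- Corollary (facets of symmetric edge polytopes). -/
theorem facet_symmetric_edge_polytope {V : Type*} [Fintype V] [DecidableEq V]
    (G : SimpleGraph V) (R1 : Set (V × V)) (hsub : R1 ⊆ doubleEdges G)
    (hdim : polyDim (DE R1) = polyDim (DE (doubleEdges G)) - 1) :
    IsFacetOf (DE R1) (DE (doubleEdges G)) ↔
      (numComponents R1 = numComponents (doubleEdges G) ∧
        ∃ ρ : V → ℝ, ∀ v w : V, G.Adj v w →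
          ((v, w) ∈ R1 → ρ v - ρ w = 1) ∧
          ((w, v) ∈ R1 → ρ v - ρ w = -1) ∧
          ((v, w) ∉ R1 ∧ (w, v) ∉ R1 → ρ v - ρ w = 0)) := by
  classical
  constructor
  · rintro ⟨hface, -⟩
    have hG : (doubleEdges G).Nonempty := by
      by_contra hne
      rw [Set.not_nonempty_iff_eq_empty] at hne
      have hR : R1 = ∅ := by
        rw [hne] at hsub
        exact Set.subset_empty_iff.mp hsub
      rw [hne, hR] at hdim
      omega
    have hR : R1.Nonempty := by
      by_contra hne
      rw [Set.not_nonempty_iff_eq_empty] at hne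
      rw [hne, polyDim_DE_empty, polyDim_DE _ hG, vectorSpan_double] at hdim
      have h0 : Module.finrank ℝ (Submodule.span ℝ (epsVec '' doubleEdges G)) = 0 := by omega
      rw [Submodule.finrank_eq_zero] at h0
      obtain ⟨⟨v, w⟩, hvw⟩ := hG
      have h1 : epsVec (v, w) ∈ Submodule.span ℝ (epsVec '' doubleEdges G) :=
        Submodule.subset_span ⟨_, hvw, rfl⟩
      rw [h0, Submodule.mem_bot] at h1
      have h2 := congrFun h1 v
      have hne' : v ≠ w := G.ne_of_adj hvw
      simp [epsVec, hne'] at h2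
    rcases hface with hEq | ⟨l, c, hle, hF⟩
    · rw [hEq] at hdim
      omega
    have hmemG : ∀ v w, G.Adj v w → epsVec (v, w) ∈ DE (doubleEdges G) := fun v w h =>
      subset_convexHull ℝ _ ⟨(v, w), h, rfl⟩
    have hmemR : ∀ v w, (v, w) ∈ R1 → l (epsVec (v, w)) = c := by
      intro v w h
      have h1 : epsVec (v, w) ∈ DE R1 := subset_convexHull ℝ _ ⟨(v, w), h, rfl⟩
      rw [hF] at h1
      exact h1.2
    have hle' : ∀ v w, G.Adj v w → l (epsVec (v, w)) ≤ c := fun v w h => hle _ (hmemG v w h)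
    have hconv : ∀ v w, G.Adj v w → l (epsVec (v, w)) = c → (v, w) ∈ R1 := by
      intro v w h hc
      apply mem_of_epsVec_mem_DE _ _ _ (G.ne_of_adj h)
      rw [hF]
      exact ⟨hmemG v w h, hc⟩
    have hc : 0 < c := by
      by_contra hc
      have hall : ∀ v w, G.Adj v w → (v, w) ∈ R1 := by
        intro v w h
        apply hconv v w h
        have h1 := hle' v w h
        have h2 := hle' w v h.symm
        obtain ⟨⟨a, b⟩, hab⟩ := hR
        have h3 := hmemR a b hab
        have h4 := hle' b a (G.adj_symm (hsub hab))
        rw [epsVec_swap, map_neg] at h2 h4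
        linarith
      have : R1 = doubleEdges G := Set.Subset.antisymm hsub (fun e he => hall e.1 e.2 he)
      rw [this] at hdim
      omega
    have hspan : Submodule.span ℝ (epsVec '' R1) = Submodule.span ℝ (epsVec '' doubleEdges G) := by
      apply Submodule.eq_of_le_of_finrank_le (Submodule.span_mono (Set.image_mono hsub))
      rw [polyDim_DE _ hG, polyDim_DE _ hR, vectorSpan_double] at hdim
      have hlt : vectorSpan ℝ (epsVec '' R1) < Submodule.span ℝ (epsVec '' R1) := by
        refine lt_of_le_of_ne ?_ ?_
        · rw [vectorSpan_def, Submodule.span_le]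
          rintro _ ⟨x, hx, y, hy, rfl⟩
          exact Submodule.sub_mem _ (Submodule.subset_span hx) (Submodule.subset_span hy)
        · intro he
          have hker : vectorSpan ℝ (epsVec '' R1) ≤ LinearMap.ker l := by
            rw [vectorSpan_def, Submodule.span_le]
            rintro _ ⟨_, ⟨⟨a, b⟩, hx, rfl⟩, _, ⟨⟨a', b'⟩, hy, rfl⟩, rfl⟩
            simp [hmemR _ _ hx, hmemR _ _ hy]
          obtain ⟨⟨a, b⟩, hab⟩ := hR
          have h1 : epsVec (a, b) ∈ Submodule.span ℝ (epsVec '' R1) :=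
            Submodule.subset_span ⟨_, hab, rfl⟩
          rw [← he] at h1
          have h2 := hker h1
          rw [LinearMap.mem_ker, hmemR _ _ hab] at h2
          exact hc.ne' h2
      have := Submodule.finrank_lt_finrank_of_lt hlt
      omega
    have hadj : ∀ v w, G.Adj v w → Relation.EqvGen (edgeRel R1) v w := by
      intro v w h
      apply eqvGen_of_mem_span
      rw [hspan]
      exact Submodule.subset_span ⟨_, h, rfl⟩
    have hrel : Relation.EqvGen (edgeRel R1) = Relation.EqvGen (edgeRel (doubleEdges G)) := by
      funext a b
      apply propext
      constructor
      · intro h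
        exact h.mono (fun x y hxy => hsub hxy)
      · intro h
        induction h with
        | rel x y h => exact hadj x y h
        | refl x => exact Relation.EqvGen.refl x
        | symm x y _ ih => exact ih.symm _ _
        | trans x y z _ _ ih1 ih2 => exact ih1.trans _ _ _ ih2
    refine ⟨by rw [numComponents, numComponents, hrel], ?_⟩
    let ρ : V → ℝ := fun v => l (Pi.single v 1) / c
    have hρ : ∀ v w, ρ v - ρ w = l (epsVec (v, w)) / c := by
      intro v w
      simp only [ρ, epsVec_eq_single, map_sub, sub_div]
    have hρ1 : ∀ v w, (v, w) ∈ R1 → ρ v - ρ w = 1 := by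
      intro v w h
      rw [hρ, hmemR v w h, div_self hc.ne']
    have hint : ∀ v w, Relation.EqvGen (edgeRel R1) v w → ∃ n : ℤ, ρ v - ρ w = n := by
      intro v w h
      induction h with
      | rel x y h => exact ⟨1, by rw [hρ1 x y h]; simp⟩
      | refl x => exact ⟨0, by simp⟩
      | symm x y _ ih =>
        obtain ⟨n, hn⟩ := ih
        exact ⟨-n, by push_cast; linarith⟩
      | trans x y z _ _ ih1 ih2 =>
        obtain ⟨n, hn⟩ := ih1
        obtain ⟨m, hm⟩ := ih2
        exact ⟨n + m, by push_cast; linarith⟩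
    have hlt : ∀ v w, G.Adj v w → (v, w) ∉ R1 → ρ v - ρ w < 1 := by
      intro v w h hn
      rw [hρ, div_lt_one hc]
      exact lt_of_le_of_ne (hle' v w h) (fun he => hn (hconv v w h he))
    refine ⟨ρ, fun v w h => ⟨hρ1 v w, fun h' => ?_, fun h' => ?_⟩⟩
    · have := hρ1 w v h'
      linarith
    · obtain ⟨n, hn⟩ := hint v w (hadj v w h)
      have h1 := hlt v w h h'.1
      have h2 := hlt w v h.symm h'.2
      have h3 : (n : ℝ) < 1 := by linarith
      have h4 : (-1 : ℝ) < n := by linarith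
      have h5 : n < 1 := by exact_mod_cast h3
      have h6 : -1 < n := by exact_mod_cast h4
      have h7 : n = 0 := by omega
      rw [hn, h7]
      simp
  · rintro ⟨-, ρ, hρ⟩
    refine ⟨Or.inr ?_, hdim⟩
    let l : (V → ℝ) →ₗ[ℝ] ℝ := Fintype.linearCombination ℝ ρ
    have hl : ∀ a b, l (epsVec (a, b)) = ρ a - ρ b := by
      intro a b
      simp [l, epsVec_eq_single, Fintype.linearCombination_apply_single]
    have hS : ∀ x ∈ epsVec '' doubleEdges G, l x ≤ 1 := by
      rintro _ ⟨⟨v, w⟩, h, rfl⟩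
      obtain ⟨h1, h2, h3⟩ := hρ v w h
      rw [hl]
      by_cases hv : (v, w) ∈ R1
      · linarith [h1 hv]
      by_cases hw : (w, v) ∈ R1
      · linarith [h2 hw]
      · linarith [h3 ⟨hv, hw⟩]
    have hT : {s ∈ epsVec '' doubleEdges G | l s = 1} = epsVec '' R1 := by
      ext x
      constructor
      · rintro ⟨⟨⟨v, w⟩, h, rfl⟩, hx⟩
        obtain ⟨h1, h2, h3⟩ := hρ v w h
        rw [hl] at hx
        refine ⟨(v, w), ?_, rfl⟩
        by_contra hv
        by_cases hw : (w, v) ∈ R1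
        · linarith [h2 hw]
        · linarith [h3 ⟨hv, hw⟩]
      · rintro ⟨⟨v, w⟩, h, rfl⟩
        exact ⟨⟨_, hsub h, rfl⟩, by rw [hl]; exact (hρ v w (hsub h)).1 h⟩
    refine ⟨l, 1, fun x hx => (mem_hull_face _ l 1 hS x hx).1, ?_⟩
    apply Set.Subset.antisymm
    · intro x hx
      refine ⟨convexHull_mono (Set.image_mono hsub) hx, ?_⟩
      have hsub1 : DE R1 ⊆ {x | l x = 1} := by
        apply convexHull_min
        · rw [← hT]
          exact fun x hx => hx.2
        · exact convex_hyperplane (LinearMap.isLinear l) 1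
      exact hsub1 hx
    · rintro x ⟨hx, hx1⟩
      have := (mem_hull_face _ l 1 hS x hx).2 hx1
      rwa [hT] at this
end

section
/- Let Q be a finite quiver without loops and multiedges and let R be a lluf subquiver of Q with |π_0(R)| = |π_0(Q)| + 1. If DE(R) is a facet of DE(Q), then the contraction Q/R is acyclic. -/
open scoped BigOperators

theorem aux_lin {V : Type*} [Fintype V] [DecidableEq V] (l : (V → ℝ) →ₗ[ℝ] ℝ) (e : V × V) :
    l (epsVec e) = l (Pi.single e.1 1) - l (Pi.single e.2 1) := by
  rw [← map_sub]
  congr 1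
  funext u
  simp [epsVec, Pi.single_apply]

theorem aux_extreme {V : Type*} [Fintype V] [DecidableEq V] (R : Set (V × V)) (e : V × V)
    (he : e.1 ≠ e.2) (hR : ∀ v : V, (v, v) ∉ R) (h : epsVec e ∈ DE R) : e ∈ R := by
  by_contra hn
  let g : (V → ℝ) →ₗ[ℝ] ℝ := LinearMap.proj (R := ℝ) (φ := fun _ : V => ℝ) e.1 -
    LinearMap.proj (R := ℝ) (φ := fun _ : V => ℝ) e.2
  have h1 : DE R ⊆ {x | g x ≤ 1} := by
    apply convexHull_min
    · rintro _ ⟨f, hf, rfl⟩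
      have hne : f ≠ e := fun h => hn (h ▸ hf)
      have hl : f.1 ≠ f.2 := fun h => hR f.1 (by
        have : f = (f.1, f.1) := Prod.ext rfl h.symm
        exact this ▸ hf)
      rcases f with ⟨a, b⟩
      rcases e with ⟨c, d⟩
      have : ¬ (c = a ∧ d = b) := fun ⟨h1, h2⟩ => hne (by rw [h1, h2])
      simp only [g, epsVec, Set.mem_ofPred_eq, LinearMap.sub_apply, LinearMap.proj_apply]
      simp only at he hl
      split_ifs <;> first | (exfalso; grind) | norm_num
    · exact convex_halfSpace_le g.isLinear 1
  have h2 := h1 h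
  simp only [g, epsVec, Set.mem_ofPred_eq, LinearMap.sub_apply, LinearMap.proj_apply] at h2
  simp [he, he.symm] at h2
  norm_num at h2

theorem aux_comp {V : Type*} [Fintype V] [DecidableEq V] (Q R : Set (V × V)) (hsub : R ⊆ Q)
    (hs : Submodule.span ℝ (epsVec '' Q) ≤ Submodule.span ℝ (epsVec '' R)) :
    numComponents R = numComponents Q := by
  classical
  have key : Relation.EqvGen (edgeRel R) = Relation.EqvGen (edgeRel Q) := by
    funext a b
    apply propext
    constructor
    · exact Relation.EqvGen.mono (r := edgeRel R) (p := edgeRel Q) (fun a b h => hsub h) a b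
    · intro h
      induction h with
      | refl x => exact Relation.EqvGen.refl x
      | symm x y _ ih => exact ih.symm
      | trans x y z _ _ ih1 ih2 => exact ih1.trans _ _ _ ih2
      | rel v w hvw =>
        let l : (V → ℝ) →ₗ[ℝ] ℝ :=
          ∑ u, (if Relation.EqvGen (edgeRel R) v u then (1 : ℝ) else 0) • LinearMap.proj u
        have hl : ∀ u, l (Pi.single u 1) =
            if Relation.EqvGen (edgeRel R) v u then (1 : ℝ) else 0 := by
          intro u
          simp only [l, LinearMap.sum_apply, LinearMap.smul_apply, LinearMap.proj_apply, smul_eq_mul]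
          simp [Pi.single_apply]
        have h1 : Submodule.span ℝ (epsVec '' R) ≤ LinearMap.ker l := by
          rw [Submodule.span_le]
          rintro _ ⟨f, hf, rfl⟩
          have hf' : Relation.EqvGen (edgeRel R) f.1 f.2 := Relation.EqvGen.rel _ _ hf
          have : Relation.EqvGen (edgeRel R) v f.1 ↔ Relation.EqvGen (edgeRel R) v f.2 :=
            ⟨fun h => h.trans _ _ _ hf', fun h => h.trans _ _ _ hf'.symm⟩
          simp only [SetLike.mem_coe, LinearMap.mem_ker]
          rw [aux_lin, hl, hl]
          simp [this]
        have h2 := h1 (hs (Submodule.subset_span ⟨(v, w), hvw, rfl⟩))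
        rw [LinearMap.mem_ker, aux_lin, hl, hl, if_pos (Relation.EqvGen.refl v)] at h2
        by_contra hn
        simp [hn] at h2
  unfold numComponents
  rw [key]

theorem aux_affine {V : Type*} [DecidableEq V] (E : Set (V × V)) :
    affineSpan ℝ (DE E) = affineSpan ℝ (epsVec '' E) := affineSpan_convexHull _

theorem aux_final {V : Type*} [Fintype V] [DecidableEq V] (Q R : Set (V × V))
    (l : (V → ℝ) →ₗ[ℝ] ℝ) (h0 : ∀ e ∈ R, l (epsVec e) = 0)
    (h1 : ∀ e ∈ Q \ R, l (epsVec e) < 0) : IsAcyclicQ (contraction Q R) := by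
  rintro ⟨n, v, hn, hv, hE⟩
  have hw : ∀ a b, Relation.EqvGen (edgeRel R) a b →
      l (Pi.single a 1) = l (Pi.single b 1) := by
    intro a b h
    induction h with
    | refl x => rfl
    | symm x y _ ih => exact ih.symm
    | trans x y z _ _ ih1 ih2 => exact ih1.trans ih2
    | rel v w hvw =>
      have := h0 _ hvw
      rw [aux_lin] at this
      exact sub_eq_zero.mp this
  let P : Quot (Relation.EqvGen (edgeRel R)) → ℝ := Quot.lift (fun a => l (Pi.single a 1)) hw
  have hm : StrictMono (fun i => P (v i)) := by
    rw [Fin.strictMono_iff_lt_succ]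
    intro i
    obtain ⟨e, he, hp⟩ := hE i
    have := h1 e he
    rw [aux_lin] at this
    have e1 := (Prod.ext_iff.mp hp).1
    have e2 := (Prod.ext_iff.mp hp).2
    simp only at e1 e2
    simp only [e1, e2, P]
    linarith
  have := hm (show (0 : Fin (n + 1)) < Fin.last n by
    rw [Fin.lt_def]; simp; omega)
  simp [hv] at this

/-- If zero lies in the affine hull for Q then also in that for R. -/
theorem aux_dim {V : Type*} [Fintype V] [DecidableEq V]
    (Q1 R1 : Set (V × V)) (hloop : ∀ v : V, (v, v) ∉ Q1) (hsub : R1 ⊆ Q1)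
    (hcomp : numComponents R1 = numComponents Q1 + 1)
    (hdim : polyDim (DE R1) = polyDim (DE Q1) - 1)
    (hQ : (0 : V → ℝ) ∈ affineSpan ℝ (epsVec '' Q1)) :
    (0 : V → ℝ) ∈ affineSpan ℝ (epsVec '' R1) := by
  by_contra hR
  have hQne : Q1.Nonempty := by
    by_contra h
    rw [Set.not_nonempty_iff_eq_empty] at h
    subst h
    rw [Set.image_empty, AffineSubspace.span_empty] at hQ
    exact AffineSubspace.notMem_bot ℝ _ _ hQ
  have hDQ : DE Q1 ≠ ∅ := by
    simpa [DE, ← Set.nonempty_iff_ne_empty] using hQne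
  have hdirQ : Submodule.span ℝ (epsVec '' Q1) ≤
      (affineSpan ℝ (epsVec '' Q1)).direction := by
    rw [Submodule.span_le]
    intro x hx
    have := AffineSubspace.vsub_mem_direction (subset_affineSpan ℝ _ hx) hQ
    simpa using this
  have hdimQ : polyDim (DE Q1) =
      (Module.finrank ℝ (affineSpan ℝ (epsVec '' Q1)).direction : ℤ) := by
    rw [polyDim, if_neg hDQ, aux_affine]
  rcases R1.eq_empty_or_nonempty with rfl | ⟨r, hr⟩
  · have h0 : polyDim (DE (∅ : Set (V × V))) = -1 := by simp [polyDim, DE]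
    have h1 : Module.finrank ℝ (affineSpan ℝ (epsVec '' Q1)).direction = 0 := by omega
    rw [Submodule.finrank_eq_zero] at h1
    rw [h1] at hdirQ
    obtain ⟨e, he⟩ := hQne
    have h2 := hdirQ (Submodule.subset_span ⟨e, he, rfl⟩)
    rw [Submodule.mem_bot] at h2
    have h3 := congrFun h2 e.1
    have hne : e.1 ≠ e.2 := fun h => hloop e.1 (by
      have : e = (e.1, e.1) := Prod.ext rfl h.symm
      exact this ▸ he)
    simp [epsVec, hne] at h3
  · have hDR : DE R1 ≠ ∅ := by
      have hne : R1.Nonempty := ⟨r, hr⟩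
      simpa [DE, ← Set.nonempty_iff_ne_empty] using hne.ne_empty
    have hdimR : polyDim (DE R1) =
        (Module.finrank ℝ (affineSpan ℝ (epsVec '' R1)).direction : ℤ) := by
      rw [polyDim, if_neg hDR, aux_affine]
    have hrm : epsVec r ∈ affineSpan ℝ (epsVec '' R1) :=
      subset_affineSpan ℝ _ ⟨r, hr, rfl⟩
    have hlt : (affineSpan ℝ (epsVec '' R1)).direction < Submodule.span ℝ (epsVec '' R1) := by
      refine lt_of_le_of_ne ?_ ?_
      · rw [direction_affineSpan, vectorSpan_def, Submodule.span_le]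
        rintro _ ⟨x, hx, y, hy, rfl⟩
        exact Submodule.sub_mem _ (Submodule.subset_span hx) (Submodule.subset_span hy)
      · intro heq
        have h1 : epsVec r ∈ (affineSpan ℝ (epsVec '' R1)).direction := by
          rw [heq]; exact Submodule.subset_span ⟨r, hr, rfl⟩
        have h2 := AffineSubspace.vadd_mem_of_mem_direction (Submodule.neg_mem _ h1) hrm
        simp at h2
        exact hR h2
    have h1 := Submodule.finrank_lt_finrank_of_lt hlt
    have h2 := Submodule.finrank_mono hdirQ
    have hle : Submodule.span ℝ (epsVec '' R1) ≤ Submodule.span ℝ (epsVec '' Q1) :=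
      Submodule.span_mono (Set.image_mono hsub)
    have h3 := Submodule.eq_of_le_of_finrank_le hle (by omega)
    have := aux_comp Q1 R1 hsub h3.ge
    omega

/-- If `DE(R)` is a facet of `DE(Q)` and `|π_0(R)| = |π_0(Q)| + 1`, then the contraction
`Q/R` is acyclic. -/
theorem facet_contraction_acyclic {V : Type*} [Fintype V] [DecidableEq V]
    (Q1 R1 : Set (V × V)) (hloop : ∀ v : V, (v, v) ∉ Q1) (hsub : R1 ⊆ Q1)
    (hcomp : numComponents R1 = numComponents Q1 + 1)
    (hfacet : IsFacetOf (DE R1) (DE Q1)) :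
    IsAcyclicQ (contraction Q1 R1) := by
  obtain ⟨hface, hdim⟩ := hfacet
  rcases hface with hf | ⟨l, c, hle, hF⟩
  · rw [hf] at hdim; omega
  have hQmem : ∀ e ∈ Q1, epsVec e ∈ DE Q1 := fun e he => subset_convexHull ℝ _ ⟨e, he, rfl⟩
  have hRl : ∀ e ∈ R1, l (epsVec e) = c := by
    intro e he
    have : epsVec e ∈ DE R1 := subset_convexHull ℝ _ ⟨e, he, rfl⟩
    rw [hF] at this
    exact this.2
  have hlt : ∀ e ∈ Q1 \ R1, l (epsVec e) < c := by
    rintro e ⟨he, hn⟩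
    refine lt_of_le_of_ne (hle _ (hQmem e he)) fun h => hn ?_
    apply aux_extreme R1 e
    · exact fun h => hloop e.1 (by
        have : e = (e.1, e.1) := Prod.ext rfl h.symm
        exact this ▸ he)
    · exact fun v hv => hloop v (hsub hv)
    · rw [hF]; exact ⟨hQmem e he, h⟩
  by_cases hQ : (0 : V → ℝ) ∈ affineSpan ℝ (epsVec '' Q1)
  · have hR := aux_dim Q1 R1 hloop hsub hcomp hdim hQ
    have hc : c = 0 := by
      have h1 : affineSpan ℝ (epsVec '' R1) ≤
          (AffineSubspace.mk' c (⊥ : Submodule ℝ ℝ)).comap l.toAffineMap := by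
        rw [affineSpan_le]
        rintro _ ⟨e, he, rfl⟩
        simp [AffineSubspace.mem_mk', hRl e he]
      have h2 := h1 hR
      simpa [AffineSubspace.mem_mk', eq_comm] using h2
    subst hc
    exact aux_final Q1 R1 l hRl hlt
  · rcases Q1.eq_empty_or_nonempty with rfl | ⟨q, hq⟩
    · exact aux_final ∅ R1 l (fun e he => absurd (hsub he) (by simp)) (by simp)
    have hqm : epsVec q ∈ affineSpan ℝ (epsVec '' Q1) :=
      subset_affineSpan ℝ _ ⟨q, hq, rfl⟩
    have hnd : epsVec q ∉ (affineSpan ℝ (epsVec '' Q1)).direction := by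
      intro h1
      have h2 := AffineSubspace.vadd_mem_of_mem_direction (Submodule.neg_mem _ h1) hqm
      simp at h2
      exact hQ h2
    obtain ⟨f, hf, hker⟩ := Submodule.exists_le_ker_of_notMem hnd
    have hconst : ∀ e ∈ Q1, f (epsVec e) = f (epsVec q) := by
      intro e he
      have h1 := hker (AffineSubspace.vsub_mem_direction
        (subset_affineSpan ℝ (epsVec '' Q1) ⟨e, he, rfl⟩) hqm)
      rw [LinearMap.mem_ker, vsub_eq_sub, map_sub] at h1
      linarith
    have hval : ∀ e ∈ Q1, (l - (c / f (epsVec q)) • f) (epsVec e) = l (epsVec e) - c := by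
      intro e he
      simp only [LinearMap.sub_apply, LinearMap.smul_apply, hconst e he, smul_eq_mul]
      rw [div_mul_cancel₀ _ hf]
    apply aux_final Q1 R1 (l - (c / f (epsVec q)) • f)
    · intro e he
      rw [hval e (hsub he), hRl e he, sub_self]
    · intro e he
      rw [hval e he.1]
      linarith [hlt e he]
end
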